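/- arXiv:2105.00606 — 9 statements merged into one kernel-verified Lean document; each statement's English description precedes it below -/
import Mathlib

section
/- Let (A, ·, α) be a Hom-pre-Malcev algebra. Then the commutator [x,y] := x·y − y·x defines a Hom-Malcev algebra structure (A, [-,-], α) (called the associated Hom-Malcev algebra of (A, ·, α)). -/
/-!
Antisymmetry and multiplicativity of the commutator are immediate. Write `P(x,y,z,t)` for the
left-hand side of the Hom-pre-Malcev identity. Expanding all commutators by bilinearity and pushing
`α` inside products, both `P` and the Hom-Malcev identity become integer combinations of
nonassociative monomials of degree four, and comparing coefficients gives
`J_α(α x, α y, [x,z]) - [J_α(x,y,z), α² x] =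
  P(x,x,y,z) - P(x,y,z,x) + P(x,z,x,y) - P(x,z,y,x) - P(y,z,x,x) - P(z,x,y,x)`,
whose right-hand side vanishes.
-/

open LinearMap

variable {K : Type*} [Field K] [CharZero K]
variable {A : Type*} [AddCommGroup A] [Module K A]
variable {V : Type*} [AddCommGroup V] [Module K V]

/-- The Hom-Jacobian `J_α(x,y,z) = [[x,y],α(z)] + [[y,z],α(x)] + [[z,x],α(y)]`. -/
def homJac (br : A →ₗ[K] A →ₗ[K] A) (α : A →ₗ[K] A) (x y z : A) : A :=
  br (br x y) (α z) + br (br y z) (α x) + br (br z x) (α y)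

/-- A Hom-Malcev algebra: antisymmetric multiplicative bracket satisfying the
Hom-Malcev identity `J_α(α(x),α(y),[x,z]) = [J_α(x,y,z), α²(x)]`. -/
def IsHomMalcev (br : A →ₗ[K] A →ₗ[K] A) (α : A →ₗ[K] A) : Prop :=
  (∀ x y : A, br x y = - br y x) ∧
  (∀ x y : A, α (br x y) = br (α x) (α y)) ∧
  (∀ x y z : A,
    homJac br α (α x) (α y) (br x z) = br (homJac br α x y z) (α (α x)))

/-- The commutator bracket `[x,y] = x·y − y·x` of a bilinear product. -/
def commMul (mul : A →ₗ[K] A →ₗ[K] A) : A →ₗ[K] A →ₗ[K] A := mul - mul.flip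

/-- A Hom-pre-Malcev algebra: multiplicative product satisfying, with `[x,y] = x·y − y·x`,
`[α(y),α(z)]·α(x·t) + [[x,y],α(z)]·α²(t) + α²(y)·([x,z]·α(t)) − α²(x)·(α(y)·(z·t))
  + α²(z)·(α(x)·(y·t)) = 0`. -/
def IsHomPreMalcev (mul : A →ₗ[K] A →ₗ[K] A) (α : A →ₗ[K] A) : Prop :=
  (∀ x y : A, α (mul x y) = mul (α x) (α y)) ∧
  (∀ x y z t : A,
    mul (commMul mul (α y) (α z)) (α (mul x t))
      + mul (commMul mul (commMul mul x y) (α z)) (α (α t))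
      + mul (α (α y)) (mul (commMul mul x z) (α t))
      - mul (α (α x)) (mul (α y) (mul z t))
      + mul (α (α z)) (mul (α x) (mul y t)) = 0)

/-- The commutator of a Hom-pre-Malcev algebra is a Hom-Malcev algebra. -/
theorem homPreMalcev_commutator_isHomMalcev
    (mul : A →ₗ[K] A →ₗ[K] A) (α : A →ₗ[K] A)
    (h : IsHomPreMalcev mul α) :
    IsHomMalcev (commMul mul) α := by
  obtain ⟨hα, hP⟩ := h
  have hc : ∀ a b : A, commMul mul a b = mul a b - mul b a := fun _ _ => rfl
  refine ⟨fun x y => ?_, fun x y => ?_, fun x y z => ?_⟩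
  · simp only [hc, neg_sub]
  · simp only [hc, map_sub, hα]
  · have h₁ := hP x x y z
    have h₂ := hP x y z x
    have h₃ := hP x z x y
    have h₄ := hP x z y x
    have h₅ := hP y z x x
    have h₆ := hP z x y x
    simp only [homJac, hc, map_sub, map_add, LinearMap.sub_apply, LinearMap.add_apply, hα]
      at h₁ h₂ h₃ h₄ h₅ h₆ ⊢
    linear_combination (norm := abel) h₁ - h₂ + h₃ - h₄ - h₅ - h₆
end

section
/- Let (A, [-,-], α) be a Hom-Malcev algebra, V a vector space, β: V→V and ρ: A→End(V) linear maps. Then (V, ρ, β) is a representation of (A, [-,-], α) if and only if the vector space A ⊕ V equipped with the bracket [x+a, y+b]_ρ = [x,y] + ρ(x)b − ρ(y)a and the linear map (α+β)(x+a) = α(x) + β(a) is a Hom-Malcev algebra (the semi-direct product). -/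
/-!
Let `E(x,y,z) ∈ End V` (`repDefect`) be the difference of the two sides of the representation
identity. Multiplicativity of `α + β` on the semidirect product is the intertwining relation
`ρ(α x) β = β ρ(x)`. Given this relation, the `V`-component of the difference of the two sides of
the Hom-Malcev identity at `(x+a, y+b, z+c)` is
`E(y,x,z) a + E(z,y,x) a + E(x,z,x) b + E(x,x,y) c` (`sdMalcev_snd`), while the `A`-component
vanishes because `A` is Hom-Malcev. So a representation gives a Hom-Malcev algebra. Conversely,
the `b`- and `c`-terms say that `E` changes sign under swapping its first and third, or its first
and second, arguments; hence `E` is alternating, the `a`-term becomes `-2 E(x,y,z) a`, and `E = 0`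
in characteristic zero.
-/

open LinearMap

variable {K : Type*} [Field K] [CharZero K]
variable {A : Type*} [AddCommGroup A] [Module K A]
variable {V : Type*} [AddCommGroup V] [Module K V]

/-- A representation `(V, ρ, β)` of a Hom-Malcev algebra `(A, br, α)`. -/
def IsHomMalcevRep (br : A →ₗ[K] A →ₗ[K] A) (α : A →ₗ[K] A)
    (ρ : A →ₗ[K] V →ₗ[K] V) (β : V →ₗ[K] V) : Prop :=
  (∀ x : A, ρ (α x) ∘ₗ β = β ∘ₗ ρ x) ∧
  (∀ x y z : A,
    ρ (br (br x y) (α z)) ∘ₗ β ∘ₗ β =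
      ρ (α (α x)) ∘ₗ ρ (α y) ∘ₗ ρ z - ρ (α (α z)) ∘ₗ ρ (α x) ∘ₗ ρ y
        + (ρ (α (α y)) ∘ₗ ρ (br z x)) ∘ₗ β - (ρ (α (br y z)) ∘ₗ ρ (α x)) ∘ₗ β)

/-- The semidirect product bracket on `A ⊕ V`:
`[x+a, y+b] = [x,y] + ρ(x)b − ρ(y)a`. -/
def sdBracket (br : A →ₗ[K] A →ₗ[K] A) (ρ : A →ₗ[K] V →ₗ[K] V) :
    (A × V) →ₗ[K] (A × V) →ₗ[K] (A × V) :=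
  LinearMap.mk₂ K
    (fun p q => (br p.1 q.1, ρ p.1 q.2 - ρ q.1 p.2))
    (by intro p p' q; simp [Prod.ext_iff]; abel)
    (by intro c p q; simp [Prod.ext_iff, smul_sub])
    (by intro p q q'; simp [Prod.ext_iff]; abel)
    (by intro c p q; simp [Prod.ext_iff, smul_sub])

/-- Left side minus right side of the representation identity, evaluated at `v`. -/
def repDefect (br : A →ₗ[K] A →ₗ[K] A) (α : A →ₗ[K] A)
    (ρ : A →ₗ[K] V →ₗ[K] V) (β : V →ₗ[K] V) (x y z : A) (v : V) : V :=
  ρ (br (br x y) (α z)) (β (β v)) -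
    (ρ (α (α x)) (ρ (α y) (ρ z v)) - ρ (α (α z)) (ρ (α x) (ρ y v))
      + ρ (α (α y)) (ρ (br z x) (β v)) - ρ (α (br y z)) (ρ (α x) (β v)))

theorem sdBracket_apply (br : A →ₗ[K] A →ₗ[K] A) (ρ : A →ₗ[K] V →ₗ[K] V) (p q : A × V) :
    sdBracket br ρ p q = (br p.1 q.1, ρ p.1 q.2 - ρ q.1 p.2) := rfl

theorem isHomMalcevRep_iff_repDefect (br : A →ₗ[K] A →ₗ[K] A) (α : A →ₗ[K] A)
    (ρ : A →ₗ[K] V →ₗ[K] V) (β : V →ₗ[K] V) :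
    IsHomMalcevRep br α ρ β ↔
      (∀ x v, ρ (α x) (β v) = β (ρ x v)) ∧ ∀ x y z v, repDefect br α ρ β x y z v = 0 := by
  simp only [IsHomMalcevRep, LinearMap.ext_iff, repDefect, sub_eq_zero, LinearMap.comp_apply,
    LinearMap.add_apply, LinearMap.sub_apply]

/-- The `V`-component of the Hom-Malcev identity of the semidirect product, in terms of the defect
of the representation identity. -/
theorem sdMalcev_snd (br : A →ₗ[K] A →ₗ[K] A) (α : A →ₗ[K] A) (h : IsHomMalcev br α)
    (ρ : A →ₗ[K] V →ₗ[K] V) (β : V →ₗ[K] V) (hβ : ∀ x v, ρ (α x) (β v) = β (ρ x v))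
    (x y z : A) (a b c : V) :
    (homJac (sdBracket br ρ) (α.prodMap β) (α.prodMap β (x, a)) (α.prodMap β (y, b))
        (sdBracket br ρ (x, a) (z, c))).2
      - (sdBracket br ρ (homJac (sdBracket br ρ) (α.prodMap β) (x, a) (y, b) (z, c))
        (α.prodMap β (α.prodMap β (x, a)))).2
      = repDefect br α ρ β y x z a + repDefect br α ρ β z y x a
        + repDefect br α ρ β x z x b + repDefect br α ρ β x x y c := by
  obtain ⟨hs, hm, -⟩ := h
  have h0 : br x x = 0 := by
    have h2 := eq_neg_iff_add_eq_zero.mp (hs x x)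
    rw [← two_smul K] at h2
    exact (smul_eq_zero.mp h2).resolve_left two_ne_zero
  -- fix an orientation for every bracket of two of `x`, `y`, `z`, and for the outer brackets
  have hyx := hs y x
  have hzx := hs z x
  have hzy := hs z y
  have ho := hs (α y) (br x z)
  simp only [repDefect, homJac, sdBracket_apply, LinearMap.prodMap_apply, Prod.snd_add,
    hyx, hzx, hzy, ho, h0, hm, ← hβ, map_add, map_sub, map_neg, map_zero,
    LinearMap.add_apply, LinearMap.neg_apply, LinearMap.zero_apply]
  abel

theorem repDefect_add_first (br : A →ₗ[K] A →ₗ[K] A) (α : A →ₗ[K] A)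
    (ρ : A →ₗ[K] V →ₗ[K] V) (β : V →ₗ[K] V) (x x' y z : A) (v : V) :
    repDefect br α ρ β (x + x') y z v
      = repDefect br α ρ β x y z v + repDefect br α ρ β x' y z v := by
  simp only [repDefect, map_add, LinearMap.add_apply]
  abel

theorem repDefect_add_second (br : A →ₗ[K] A →ₗ[K] A) (α : A →ₗ[K] A)
    (ρ : A →ₗ[K] V →ₗ[K] V) (β : V →ₗ[K] V) (x y y' z : A) (v : V) :
    repDefect br α ρ β x (y + y') z v
      = repDefect br α ρ β x y z v + repDefect br α ρ β x y' z v := by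
  simp only [repDefect, map_add, LinearMap.add_apply]
  abel

theorem repDefect_add_third (br : A →ₗ[K] A →ₗ[K] A) (α : A →ₗ[K] A)
    (ρ : A →ₗ[K] V →ₗ[K] V) (β : V →ₗ[K] V) (x y z z' : A) (v : V) :
    repDefect br α ρ β x y (z + z') v
      = repDefect br α ρ β x y z v + repDefect br α ρ β x y z' v := by
  simp only [repDefect, map_add, LinearMap.add_apply]
  abel

/-- `(V, ρ, β)` is a representation of a Hom-Malcev algebra iff the
semidirect product `A ⊕ V` is a Hom-Malcev algebra. -/
theorem isHomMalcevRep_iff_semidirect_isHomMalcev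
    (br : A →ₗ[K] A →ₗ[K] A) (α : A →ₗ[K] A) (h : IsHomMalcev br α)
    (ρ : A →ₗ[K] V →ₗ[K] V) (β : V →ₗ[K] V) :
    IsHomMalcevRep br α ρ β ↔ IsHomMalcev (sdBracket br ρ) (α.prodMap β) := by
  rw [isHomMalcevRep_iff_repDefect]
  have hcopy := h
  obtain ⟨hs, hm, hJ⟩ := h
  constructor
  · rintro ⟨hβ, hE⟩
    refine ⟨fun p q => ?_, fun p q => ?_, ?_⟩
    · simp only [sdBracket_apply, Prod.neg_mk, neg_sub]
      rw [hs]
    · simp only [sdBracket_apply, LinearMap.prodMap_apply, hm, hβ, map_sub]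
    · rintro ⟨x, a⟩ ⟨y, b⟩ ⟨z, c⟩
      refine Prod.ext (hJ x y z) (sub_eq_zero.mp ?_)
      rw [sdMalcev_snd br α hcopy ρ β hβ]
      simp only [hE, add_zero]
  · rintro ⟨-, hM, hI⟩
    have hβ : ∀ x v, ρ (α x) (β v) = β (ρ x v) := fun x v => by
      have := congrArg Prod.snd (hM (x, 0) (0, v))
      simpa [sdBracket_apply] using this.symm
    have key : ∀ x y z a b c, repDefect br α ρ β y x z a + repDefect br α ρ β z y x a
        + repDefect br α ρ β x z x b + repDefect br α ρ β x x y c = 0 := fun x y z a b c => by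
      rw [← sdMalcev_snd br α hcopy ρ β hβ, hI, sub_self]
    have hz : ∀ x y z, repDefect br α ρ β x y z 0 = 0 := fun x y z => by
      simp [repDefect]
    have h12 : ∀ x y v, repDefect br α ρ β x x y v = 0 := fun x y v => by
      simpa only [hz, zero_add] using key x y 0 0 0 v
    have h13 : ∀ x y v, repDefect br α ρ β x y x v = 0 := fun x y v => by
      simpa only [hz, zero_add, add_zero] using key x 0 y 0 v 0
    -- polarization of the two vanishing statements
    have s12 : ∀ x y z v, repDefect br α ρ β x y z v + repDefect br α ρ β y x z v = 0 :=
      fun x y z v => by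
        have hp := h12 (x + y) z v
        simp only [repDefect_add_first, repDefect_add_second] at hp
        simp only [h12, zero_add, add_zero] at hp
        rwa [add_comm]
    have s13 : ∀ x y z v, repDefect br α ρ β x y z v + repDefect br α ρ β z y x v = 0 :=
      fun x y z v => by
        have hp := h13 (x + z) y v
        simp only [repDefect_add_first, repDefect_add_third] at hp
        simp only [h13, zero_add, add_zero] at hp
        rwa [add_comm]
    refine ⟨hβ, fun x y z v => ?_⟩
    have ka := key x y z v 0 0
    simp only [hz, add_zero] at ka
    rw [eq_neg_of_add_eq_zero_right (s12 x y z v),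
      eq_neg_of_add_eq_zero_right (s13 x y z v), ← neg_add, neg_eq_zero, ← two_smul K] at ka
    exact (smul_eq_zero.mp ka).resolve_left two_ne_zero
end

section
/- Let (V, ρ, β) be a representation of a Hom-Malcev algebra (A, [-,-], α), with α and β invertible. Define ρ⋆: A → End(V*) by ⟨ρ⋆(x)(ξ), a⟩ = −⟨ξ, β^{-2}(ρ(α(x))(a))⟩ for x ∈ A, ξ ∈ V*, a ∈ V (i.e. ρ⋆(x) = ρ*(α(x))∘(β^{-2})*, where ρ*(x)(ξ) = −ξ∘ρ(x) and (β^{-2})*(ξ) = ξ∘β^{-2}). Then (V*, ρ⋆, (β^{-1})*) is a representation of (A, [-,-], α) on the dual space V* with respect to (β^{-1})*(ξ) = ξ∘β^{-1} (the dual representation). -/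
/-!
Since `ρ x ∘ β⁻¹ = β⁻¹ ∘ ρ (α x)`, every power of `β⁻¹` in the evaluated dual identity can be moved
to the far left. The transpose reverses the order of products, and the representation identity
with `x` and `y` exchanged, together with the antisymmetry of the bracket, is exactly the reversed
identity; it is applied at `α³ y`, `α³ x`, `α³ z` to account for the twists.
-/

open LinearMap

variable {K : Type*} [Field K] [CharZero K]
variable {A : Type*} [AddCommGroup A] [Module K A]
variable {V : Type*} [AddCommGroup V] [Module K V]

/-- the dual representation of a representation of a Hom-Malcev algebra
(with `α`, `β` invertible). -/
theorem dual_rep_isHomMalcevRep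
    (br : A →ₗ[K] A →ₗ[K] A) (α : A →ₗ[K] A) (h : IsHomMalcev br α)
    (ρ : A →ₗ[K] V →ₗ[K] V) (β : V →ₗ[K] V)
    (hrep : IsHomMalcevRep br α ρ β)
    (αinv : A →ₗ[K] A) (hα₁ : αinv ∘ₗ α = LinearMap.id) (hα₂ : α ∘ₗ αinv = LinearMap.id)
    (βinv : V →ₗ[K] V) (hβ₁ : βinv ∘ₗ β = LinearMap.id) (hβ₂ : β ∘ₗ βinv = LinearMap.id)
    (ρstar : A →ₗ[K] Module.Dual K V →ₗ[K] Module.Dual K V)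
    (hρstar : ∀ (x : A) (ξ : Module.Dual K V) (a : V),
      ρstar x ξ a = -(ξ (βinv (βinv (ρ (α x) a))))) :
    IsHomMalcevRep br α ρstar βinv.dualMap := by
  obtain ⟨hanti, hmul, -⟩ := h
  obtain ⟨hβ, hρ⟩ := hrep
  have inv_left : ∀ v, βinv (β v) = v := fun v => LinearMap.congr_fun hβ₁ v
  have inv_right : ∀ v, β (βinv v) = v := fun v => LinearMap.congr_fun hβ₂ v
  have push : ∀ x v, ρ (α x) (β v) = β (ρ x v) := fun x v => LinearMap.congr_fun (hβ x) v
  have pull : ∀ x v, ρ x (βinv v) = βinv (ρ (α x) v) := by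
    intro x v
    rw [← inv_left (ρ x (βinv v)), ← push, inv_right]
  refine ⟨fun x => ?_, fun x y z => ?_⟩
  · ext ξ a
    simp [hρstar, pull]
  · ext ξ a
    have key := LinearMap.congr_fun (hρ (α (α (α y))) (α (α (α x))) (α (α (α z)))) a
    -- In this form the twists by `α` can be cancelled against `β`.
    have key' : ρ (α (α (α (br (br y x) (α z))))) (β (β a)) =
        ρ (α (α (α (α (α y))))) (ρ (α (α (α (α x)))) (ρ (α (α (α z))) a))
        - ρ (α (α (α (α (α z))))) (ρ (α (α (α (α y)))) (ρ (α (α (α x))) a))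
        + ρ (α (α (α (α (α x))))) (ρ (α (α (α (br z y)))) (β a))
        - ρ (α (α (α (α (br x z))))) (ρ (α (α (α (α y)))) (β a)) := by
      simpa [hmul] using key
    rw [hanti y x, hanti z y, hanti x z] at key'
    simp only [push, map_neg, LinearMap.neg_apply] at key'
    have key'' := congrArg
      (fun v => ξ (βinv (βinv (βinv (βinv (βinv (βinv v))))))) key'
    simp only [map_add, map_sub, map_neg, inv_left] at key''
    simp only [LinearMap.comp_apply, LinearMap.add_apply, LinearMap.sub_apply, hρstar,
      LinearMap.dualMap_apply, pull, neg_neg]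
    linear_combination key''
end

section
/- Let (A, [-,-], α) be a Hom-Malcev algebra with α invertible. Then the map ad⋆: A → End(A*) defined by ad⋆(x)(ξ) = ad*(α(x))((α^{-2})*(ξ)), i.e. ⟨ad⋆(x)(ξ), y⟩ = −⟨ξ, α^{-2}([α(x), y])⟩ for x,y ∈ A, ξ ∈ A*, is a representation of (A, [-,-], α) on A* with respect to (α^{-1})* (the coadjoint representation). -/
/-!
Since `α` is invertible, the Hom-Malcev algebra untwists: `m x y = α⁻¹ [x, y]` is an ordinary
Malcev bracket for which `α` is an automorphism (`untwist_malcev`), and `[x, y] = α (m x y)`.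
With `L x = m x`, the coadjoint map becomes `ad⋆(x) ξ = -ξ ∘ L x ∘ α⁻¹`. Pulling every power of
`α` to the right, the representation identity, evaluated at `ξ` and `α³ w`, turns into `ξ` applied
to
`L ((x y) z) w = L z (L y (L x w)) - L y (L x (L z w)) - L (z x) (L y w) + L x (L (y z) w)`,
which up to antisymmetry is the Sagle identity
`(x z)(y w) = ((x y) z) w + ((y z) w) x + ((z w) x) y + ((w x) y) z`.
In characteristic different from 2 the Sagle identity follows from the Malcev identity by
linearizing the latter in its repeated variable (`malcev_linearized`, `sagle_identity`).
-/

open LinearMap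

variable {K : Type*} [Field K] [CharZero K]
variable {A : Type*} [AddCommGroup A] [Module K A]
variable {V : Type*} [AddCommGroup V] [Module K V]

/-- Polarization of the Malcev identity `J(x, y, x z) = J(x, y, z) x` in the variable `x`. -/
lemma malcev_linearized (m : A →ₗ[K] A →ₗ[K] A)
    (hm : ∀ x y z : A, homJac m LinearMap.id x y (m x z) = m (homJac m LinearMap.id x y z) x)
    (x w y z : A) :
    homJac m LinearMap.id x y (m w z) + homJac m LinearMap.id w y (m x z) =
      m (homJac m LinearMap.id x y z) w + m (homJac m LinearMap.id w y z) x := by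
  have h₁ := hm (x + w) y z
  have h₂ := hm x y z
  have h₃ := hm w y z
  simp only [homJac, LinearMap.id_apply, map_add, LinearMap.add_apply] at h₁ h₂ h₃ ⊢
  linear_combination (norm := module) h₁ - h₂ - h₃

/-- The Sagle identity in a Malcev algebra. Writing `F(x, w; y, z)` for the difference of the two
sides of `malcev_linearized`, twice the identity is `F(x, y; z, t) - F(x, z; t, y) + F(t, x; y, z)`.
-/
lemma sagle_identity (m : A →ₗ[K] A →ₗ[K] A) (hanti : ∀ x y : A, m x y = -m y x)
    (hm : ∀ x y z : A, homJac m LinearMap.id x y (m x z) = m (homJac m LinearMap.id x y z) x)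
    (x y z t : A) :
    m (m x z) (m y t) =
      m (m (m x y) z) t + m (m (m y z) t) x + m (m (m z t) x) y + m (m (m t x) y) z := by
  have h₁ := malcev_linearized m hm x y z t
  have h₂ := malcev_linearized m hm x z t y
  have h₃ := malcev_linearized m hm t x y z
  simp only [homJac, LinearMap.id_apply, map_add, LinearMap.add_apply] at h₁ h₂ h₃
  -- Antisymmetry brings every monomial to the form `((a b) c) d` or `(a b) (c d)`,
  -- with `a b` and `c d` in a fixed order.
  simp only [hanti y x, hanti z x, hanti t x, hanti z y, hanti t y, hanti t z,
    hanti y (m _ _), hanti z (m _ _), hanti t (m _ _),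
    hanti (m z t) (m x y), hanti (m y t) (m x z), hanti (m y z) (m x t),
    map_neg, LinearMap.neg_apply, neg_neg] at h₁ h₂ h₃ ⊢
  linear_combination (norm := module) (2⁻¹ : K) • h₁ - (2⁻¹ : K) • h₂ + (2⁻¹ : K) • h₃

/-- Untwisting: if `[x, y] = α (m x y)` is a Hom-Malcev bracket with `α` an injective endomorphism
of `m`, then `m` satisfies the Malcev identity. -/
lemma untwist_malcev (br m : A →ₗ[K] A →ₗ[K] A) (α : A →ₗ[K] A) (h : IsHomMalcev br α)
    (hinj : Function.Injective α) (hbr : ∀ x y, br x y = α (m x y))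
    (hmul : ∀ x y, m (α x) (α y) = α (m x y)) (x y z : A) :
    homJac m LinearMap.id x y (m x z) = m (homJac m LinearMap.id x y z) x := by
  have h₁ := h.2.2 x y z
  simp only [homJac, hbr, hmul, ← map_add] at h₁
  simpa only [homJac, LinearMap.id_apply] using hinj (hinj (hinj (by
    simpa only [hmul] using h₁)))

/-- the coadjoint representation of a Hom-Malcev algebra with `α` invertible. -/
theorem coadjoint_isHomMalcevRep
    (br : A →ₗ[K] A →ₗ[K] A) (α : A →ₗ[K] A) (h : IsHomMalcev br α)
    (αinv : A →ₗ[K] A) (hα₁ : αinv ∘ₗ α = LinearMap.id) (hα₂ : α ∘ₗ αinv = LinearMap.id)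
    (adstar : A →ₗ[K] Module.Dual K A →ₗ[K] Module.Dual K A)
    (hadstar : ∀ (x : A) (ξ : Module.Dual K A) (y : A),
      adstar x ξ y = -(ξ (αinv (αinv (br (α x) y))))) :
    IsHomMalcevRep br α adstar αinv.dualMap := by
  have hinv : ∀ a, αinv (α a) = a := fun a => LinearMap.congr_fun hα₁ a
  have hinv' : ∀ a, α (αinv a) = a := fun a => LinearMap.congr_fun hα₂ a
  have hinj : Function.Injective α := Function.LeftInverse.injective hinv
  obtain ⟨m, hm⟩ : ∃ m : A →ₗ[K] A →ₗ[K] A, ∀ x y, m x y = αinv (br x y) :=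
    ⟨br.compr₂ αinv, fun _ _ => rfl⟩
  have hbr : ∀ x y, br x y = α (m x y) := fun x y => by rw [hm, hinv']
  have hmul : ∀ x y, m (α x) (α y) = α (m x y) := fun x y => by
    rw [hm, ← h.2.1, hinv, hbr]
  have hanti : ∀ x y, m x y = -m y x := fun x y => by
    rw [hm, hm, h.1 x y, map_neg]
  have hsagle := sagle_identity m hanti (untwist_malcev br m α h hinj hbr hmul)
  have had : ∀ x ξ y, adstar x ξ (α y) = -ξ (m x y) := fun x ξ y => by
    rw [hadstar, hbr, hmul, hinv, hinv]
  refine ⟨fun x => ?_, fun x y z => ?_⟩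
  · ext ξ t
    -- Writing the argument as `t = α² w` makes all powers of `α⁻¹` cancel.
    obtain ⟨w, rfl⟩ : ∃ w, t = α (α w) := ⟨αinv (αinv t), by simp only [hinv']⟩
    simp only [LinearMap.comp_apply, LinearMap.dualMap_apply, had, hmul, hinv]
  · ext ξ t
    obtain ⟨w, rfl⟩ : ∃ w, t = α (α (α w)) :=
      ⟨αinv (αinv (αinv t)), by simp only [hinv']⟩
    simp only [LinearMap.comp_apply, LinearMap.add_apply, LinearMap.sub_apply,
      LinearMap.dualMap_apply, hbr, had, hmul, hinv, neg_neg]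
    have key : m (m (m x y) z) w =
        m z (m y (m x w)) - m y (m x (m z w)) - m (m z x) (m y w) + m x (m (m y z) w) := by
      have hs := hsagle x y z w
      rw [hanti (m (m y z) w) x, hanti (m (m z w) x) y, hanti (m z w) x,
        hanti (m (m w x) y) z, hanti (m w x) y, hanti w x, hanti x z] at hs
      simp only [map_neg, LinearMap.neg_apply, neg_neg] at hs
      linear_combination (norm := module) -hs
    rw [key]
    simp only [map_add, map_sub]
    ring
end

section
/- Let (A, [-,-], α) be a Hom-Malcev algebra, (V, ρ, β) a representation of it, and T: V → A an O-operator associated to (V, ρ, β). Define a·b := ρ(T(a))b for a,b ∈ V. Then (V, ·, β) is a Hom-pre-Malcev algebra, and T is a morphism from its associated Hom-Malcev algebra to (A, [-,-], α), i.e. T(a·b − b·a) = [T(a), T(b)] and T∘β = α∘T. -/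
/-!
Since `T` turns the commutator of `a·b = ρ(T a) b` into the bracket of `A` and intertwines `β`
with `α`, every term of the Hom-pre-Malcev identity at `x, y, z, t` is an expression in
`ρ`, `br`, `α`, `β` evaluated at `T x, T y, T z`. The identity is then exactly the representation
identity at `(T x, T y, T z)` applied to `t`, up to antisymmetry of the bracket.
-/

open LinearMap

variable {K : Type*} [Field K] [CharZero K]
variable {A : Type*} [AddCommGroup A] [Module K A]
variable {V : Type*} [AddCommGroup V] [Module K V]

/-- An O-operator of a Hom-Malcev algebra associated to a representation `(V, ρ, β)`. -/
def IsOOperatorMalcev (br : A →ₗ[K] A →ₗ[K] A) (α : A →ₗ[K] A)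
    (ρ : A →ₗ[K] V →ₗ[K] V) (β : V →ₗ[K] V) (T : V →ₗ[K] A) : Prop :=
  α ∘ₗ T = T ∘ₗ β ∧ ∀ a b : V, br (T a) (T b) = T (ρ (T a) b - ρ (T b) a)

/-- an O-operator on a Hom-Malcev algebra induces a Hom-pre-Malcev algebra
on `V` via `a·b = ρ(T(a))b`, and `T` is a morphism of Hom-Malcev algebras. -/
theorem oOperator_induces_homPreMalcev
    (br : A →ₗ[K] A →ₗ[K] A) (α : A →ₗ[K] A) (h : IsHomMalcev br α)
    (ρ : A →ₗ[K] V →ₗ[K] V) (β : V →ₗ[K] V) (hrep : IsHomMalcevRep br α ρ β)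
    (T : V →ₗ[K] A) (hT : IsOOperatorMalcev br α ρ β T) :
    IsHomPreMalcev (ρ ∘ₗ T) β ∧
      (∀ a b : V, T ((ρ ∘ₗ T) a b - (ρ ∘ₗ T) b a) = br (T a) (T b)) ∧
      T ∘ₗ β = α ∘ₗ T := by
  obtain ⟨hanti, hmult, -⟩ := h
  obtain ⟨hβ, hρ⟩ := hrep
  obtain ⟨hαT, hbr⟩ := hT
  have hTβ : ∀ a, T (β a) = α (T a) := fun a => (LinearMap.congr_fun hαT a).symm
  have hβρ : ∀ x v, β (ρ x v) = ρ (α x) (β v) := fun x v => (LinearMap.congr_fun (hβ x) v).symm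
  have hcomm : ∀ a b, T (commMul (ρ ∘ₗ T) a b) = br (T a) (T b) := fun a b => (hbr a b).symm
  refine ⟨⟨fun x y => ?_, fun x y z t => ?_⟩, fun a b => (hbr a b).symm, hαT.symm⟩
  · simp only [LinearMap.comp_apply, hβρ, hTβ]
  · have key := LinearMap.congr_fun (hρ (T x) (T y) (T z)) t
    -- the representation identity contains `[T z, T x]`, the Hom-pre-Malcev one `[T x, T z]`
    rw [hanti (T z) (T x)] at key
    simp only [LinearMap.comp_apply, LinearMap.add_apply, LinearMap.sub_apply, map_neg,
      LinearMap.neg_apply, hmult] at key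
    simp only [LinearMap.comp_apply ρ T, hcomm, hTβ, hβρ, key]
    abel
end

section
/- Let R: A → A be a Rota-Baxter operator of weight 0 on a Hom-Malcev algebra (A, [-,-], α). Then (A, ·, α) is a Hom-pre-Malcev algebra, where x·y := [R(x), y] for all x,y ∈ A. -/
/-!
By the Rota-Baxter identity, `R` carries the commutator of `x·y = [R x, y]` to the original
bracket: `R (x·y - y·x) = [R x, R y]`. Hence the Hom-pre-Malcev expression at `x, y, z, t`
becomes an expression in `R x, R y, R z, t` and the bracket alone, and its vanishing is the
Hom-version of Sagle's identity
`[[αy,αz],[αx,αt]] = [[[y,x],αz],α²t] + [[[x,z],αt],α²y] + [[[z,t],αy],α²x] + [[[t,y],αx],α²z]`.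
This identity (`IsHomMalcev.sagle`) holds in every Hom-Malcev algebra: it is half of a signed sum
of three instances of the linearized Hom-Malcev identity (`IsHomMalcev.linearized`).
-/

open LinearMap

variable {K : Type*} [Field K] [CharZero K]
variable {A : Type*} [AddCommGroup A] [Module K A]
variable {V : Type*} [AddCommGroup V] [Module K V]

/-- Polarization of the Hom-Malcev identity in its repeated variable. -/
theorem IsHomMalcev.linearized {br : A →ₗ[K] A →ₗ[K] A} {α : A →ₗ[K] A}
    (h : IsHomMalcev br α) (x w y z : A) :
    homJac br α (α x) (α y) (br w z) + homJac br α (α w) (α y) (br x z)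
      = br (homJac br α x y z) (α (α w)) + br (homJac br α w y z) (α (α x)) := by
  have hxw := h.2.2 (x + w) y z
  have hx := h.2.2 x y z
  have hw := h.2.2 w y z
  simp only [homJac, map_add, LinearMap.add_apply] at hxw hx hw ⊢
  linear_combination (norm := module) hxw - hx - hw

/-- The Hom-Sagle identity, with the terms arranged as in the Hom-pre-Malcev identity. -/
theorem IsHomMalcev.sagle {br : A →ₗ[K] A →ₗ[K] A} {α : A →ₗ[K] A}
    (h : IsHomMalcev br α) (x y z t : A) :
    br (br (α y) (α z)) (br (α x) (α t)) + br (br (br x y) (α z)) (α (α t))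
      + br (α (α y)) (br (br x z) (α t)) - br (α (α x)) (br (α y) (br z t))
      + br (α (α z)) (br (α x) (br y t)) = 0 := by
  have h₁ := h.linearized x y z t
  have h₂ := h.linearized x z t y
  have h₃ := h.linearized t x y z
  obtain ⟨anti, mult, -⟩ := h
  -- Antisymmetry is used to reduce every monomial to the form `[[[a,b],αc],α²d]` or
  -- `[[αa,αb],[αc,αd]]`, with the variables inside each pair ordered as `x, y, z, t`.
  have swap : ∀ a b c, br (α c) (br a b) = - br (br a b) (α c) := fun _ _ _ => anti _ _
  simp only [homJac, mult, swap, anti y x, anti z x, anti t x, anti z y, anti t y, anti t z,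
    anti (α t) (α y), map_add, map_neg, LinearMap.add_apply, LinearMap.neg_apply, neg_neg,
    anti (br (α z) (α t)) (br (α x) (α y)), anti (br (α y) (α t)) (br (α x) (α z)),
    anti (br (α y) (α z)) (br (α x) (α t))] at h₁ h₂ h₃ ⊢
  linear_combination (norm := module) (1 / 2 : K) • h₁ + (1 / 2 : K) • h₂ - (1 / 2 : K) • h₃

/-- a Rota-Baxter operator of weight 0 on a Hom-Malcev algebra induces a
Hom-pre-Malcev algebra via `x·y = [R(x), y]`. -/
theorem rotaBaxter_induces_homPreMalcev
    (br : A →ₗ[K] A →ₗ[K] A) (α : A →ₗ[K] A) (h : IsHomMalcev br α)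
    (R : A →ₗ[K] A) (hRα : R ∘ₗ α = α ∘ₗ R)
    (hR : ∀ x y : A, br (R x) (R y) = R (br (R x) y + br x (R y))) :
    IsHomPreMalcev (br ∘ₗ R) α := by
  have hα : ∀ x, R (α x) = α (R x) := fun x => LinearMap.congr_fun hRα x
  have hcomm : ∀ x y, R (commMul (br ∘ₗ R) x y) = br (R x) (R y) := by
    intro x y
    rw [hR, h.1 x (R y), ← sub_eq_add_neg]
    rfl
  refine ⟨fun x y => ?_, fun x y z t => ?_⟩
  · simp only [LinearMap.comp_apply, h.2.1, hα]
  · simpa only [LinearMap.comp_apply, hcomm, hα, h.2.1] using h.sagle (R x) (R y) (R z) t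
end

section
/- Let (A, [-,-], α) be a Hom-Malcev algebra. Then there exists a compatible Hom-pre-Malcev algebra structure on A (i.e. a bilinear product · with α(x·y) = α(x)·α(y) such that (A, ·, α) is a Hom-pre-Malcev algebra and x·y − y·x = [x,y] for all x,y) if and only if there exists an invertible O-operator T: V → A associated to some representation (V, ρ, β) of (A, [-,-], α). -/
/-!
A compatible product `·` and an invertible O-operator are the same data up to transport.
Given `·`, left multiplication is a representation of `A` on itself (with `β = α`): its
representation identity is the Hom-pre-Malcev identity rearranged, and `T = id` is an
O-operator because the commutator of `·` is the bracket. Conversely, given an invertible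
`T : V → A`, the product `x · y = T (ρ(x) (T⁻¹ y))` satisfies `x · T a = T (ρ(x) a)`, so the
Hom-pre-Malcev identity is the image under `T` of the representation identity, and the
O-operator equation says that its commutator is the bracket.
-/

open LinearMap

variable {K : Type*} [Field K] [CharZero K]
variable {A : Type*} [AddCommGroup A] [Module K A]
variable {V : Type*} [AddCommGroup V] [Module K V]
universe u v

/-- a Hom-Malcev algebra admits a compatible Hom-pre-Malcev structure iff
there exists an invertible O-operator associated to some representation. -/
theorem compatible_homPreMalcev_iff_invertible_oOperator
    {K : Type u} [Field K] [CharZero K] {A : Type v} [AddCommGroup A] [Module K A]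
    (br : A →ₗ[K] A →ₗ[K] A) (α : A →ₗ[K] A) (h : IsHomMalcev br α) :
    (∃ mul : A →ₗ[K] A →ₗ[K] A,
        IsHomPreMalcev mul α ∧ ∀ x y : A, mul x y - mul y x = br x y) ↔
    (∃ (V : ModuleCat.{v} K) (ρ : A →ₗ[K] V →ₗ[K] V) (β : V →ₗ[K] V) (T : V →ₗ[K] A),
        IsHomMalcevRep br α ρ β ∧ IsOOperatorMalcev br α ρ β T ∧
          Function.Bijective T) := by
  refine ⟨?_, ?_⟩
  · rintro ⟨mul, ⟨hα, hid⟩, hbr⟩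
    have hc : commMul mul = br := by
      ext x y
      simpa [commMul] using hbr x y
    rw [hc] at hid
    refine ⟨ModuleCat.of K A, mul, α, LinearMap.id, ⟨?_, ?_⟩, ⟨rfl, ?_⟩,
      Function.bijective_id⟩
    · intro x
      ext t
      exact (hα x t).symm
    · intro x y z
      ext t
      have e := hid x y z t
      -- the third term carries `[x,z]` in one identity and `[z,x]` in the other
      rw [h.1 x z, map_neg, LinearMap.neg_apply, map_neg, hα x t, ← h.2.1 y z] at e
      change mul (br (br x y) (α z)) (α (α t)) =
        mul (α (α x)) (mul (α y) (mul z t)) - mul (α (α z)) (mul (α x) (mul y t))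
          + mul (α (α y)) (mul (br z x) (α t)) - mul (α (br y z)) (mul (α x) (α t))
      rw [← sub_eq_zero, ← e]
      abel
    · intro a b
      exact (hbr a b).symm
  · rintro ⟨V, ρ, β, T, ⟨hβ, hρ⟩, ⟨hT, hO⟩, hbij⟩
    let e : V ≃ₗ[K] A := LinearEquiv.ofBijective T hbij
    let mul : A →ₗ[K] A →ₗ[K] A :=
      ((LinearMap.llcomp K A V A T) ∘ₗ (LinearMap.lcomp K V e.symm.toLinearMap)) ∘ₗ ρ
    -- every element is some `T a`, and on such elements `e.symm` disappears
    have hmul (x : A) (a : V) : mul x (T a) = T (ρ x a) := by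
      have : e.symm (T a) = a := e.symm_apply_apply a
      simp [mul, this]
    have hαT (a : V) : α (T a) = T (β a) := LinearMap.congr_fun hT a
    have hβ' (x : A) (a : V) : ρ (α x) (β a) = β (ρ x a) := LinearMap.congr_fun (hβ x) a
    have hbr (x y : A) : mul x y - mul y x = br x y := by
      obtain ⟨a, rfl⟩ := hbij.2 x
      obtain ⟨b, rfl⟩ := hbij.2 y
      rw [hmul, hmul, hO, map_sub]
    have hc : commMul mul = br := by
      ext x y
      simpa [commMul] using hbr x y
    refine ⟨mul, ⟨?_, ?_⟩, hbr⟩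
    · intro x y
      obtain ⟨b, rfl⟩ := hbij.2 y
      rw [hmul, hαT, hαT, hmul, hβ']
    · intro x y z t
      obtain ⟨t, rfl⟩ := hbij.2 t
      have key : ρ (br (br x y) (α z)) (β (β t)) =
          ρ (α (α x)) (ρ (α y) (ρ z t)) - ρ (α (α z)) (ρ (α x) (ρ y t))
            + ρ (α (α y)) (ρ (br z x) (β t)) - ρ (α (br y z)) (ρ (α x) (β t)) :=
        LinearMap.congr_fun (hρ x y z) t
      rw [hc, h.1 x z, ← h.2.1 y z]
      simp only [hmul, hαT, map_neg, LinearMap.neg_apply, key, hβ', map_add, map_sub]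
      abel
end

section
/- Let (A, ∗, α) be a Hom-alternative algebra and R: A→A a Rota-Baxter operator of weight 0 on A (i.e. R∘α = α∘R and R(x)∗R(y) = R(R(x)∗y + x∗R(y)) for all x,y). Define x≺y = x∗R(y) and x≻y = R(x)∗y. Then (A, ≺, ≻, α) is a Hom-pre-alternative algebra. Moreover, if x·y := [R(x), y] (where [u,v] = u∗v − v∗u) is the Hom-pre-Malcev product associated to the Hom-Malcev admissible algebra (A, [-,-], α), then x·y = x≻y − y≺x for all x,y ∈ A. -/
/-!
Write `as(x, y, z) = (x∗y)∗α(z) − α(x)∗(y∗z)`. Linearizing the two alternativity axioms shows that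
`as` is skew-symmetric in its first two and in its last two arguments. Since
`R(x≺y + x≻y) = R(x)∗R(y)` and `R` commutes with `α`, the four Hom-pre-alternative identities are
exactly these skew-symmetries evaluated with `R` applied to two of the three arguments.
-/

open LinearMap

variable {K : Type*} [Field K] [CharZero K]
variable {A : Type*} [AddCommGroup A] [Module K A]
variable {V : Type*} [AddCommGroup V] [Module K V]

/-- A Hom-alternative algebra: multiplicative product with
`as_α(x,x,y) = 0 = as_α(y,x,x)` where `as_α(x,y,z) = (x∗y)∗α(z) − α(x)∗(y∗z)`. -/
def IsHomAlternative (mul : A →ₗ[K] A →ₗ[K] A) (α : A →ₗ[K] A) : Prop :=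
  (∀ x y : A, α (mul x y) = mul (α x) (α y)) ∧
  (∀ x y : A, mul (mul x x) (α y) - mul (α x) (mul x y) = 0) ∧
  (∀ x y : A, mul (mul y x) (α x) - mul (α y) (mul x x) = 0)

/-- A Hom-pre-alternative algebra `(A, prec, succ, α)` (`prec = ≺`, `succ = ≻`). -/
def IsHomPreAlternative (prec succ : A →ₗ[K] A →ₗ[K] A) (α : A →ₗ[K] A) : Prop :=
  (∀ x y : A, α (prec x y) = prec (α x) (α y)) ∧
  (∀ x y : A, α (succ x y) = succ (α x) (α y)) ∧
  (∀ x y z : A,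
    prec (succ x y) (α z) - succ (α x) (prec y z) + prec (prec y x) (α z)
      - prec (α y) ((prec + succ) x z) = 0) ∧
  (∀ x y z : A,
    prec (succ x y) (α z) - succ (α x) (prec y z) + succ ((prec + succ) x z) (α y)
      - succ (α x) (succ z y) = 0) ∧
  (∀ x y z : A,
    succ ((prec + succ) x y) (α z) - succ (α x) (succ y z)
      + succ ((prec + succ) y x) (α z) - succ (α y) (succ x z) = 0) ∧
  (∀ x y z : A,
    prec (prec x y) (α z) - prec (α x) ((prec + succ) y z)
      + prec (prec x z) (α y) - prec (α x) ((prec + succ) z y) = 0)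

/-- Linearized left alternativity. -/
theorem IsHomAlternative.left_skew {mul : A →ₗ[K] A →ₗ[K] A} {α : A →ₗ[K] A}
    (h : IsHomAlternative mul α) (x y z : A) :
    mul (mul x y) (α z) - mul (α x) (mul y z)
      + (mul (mul y x) (α z) - mul (α y) (mul x z)) = 0 := by
  have hxy := h.2.1 (x + y) z
  have hx := h.2.1 x z
  have hy := h.2.1 y z
  simp only [map_add, LinearMap.add_apply] at hxy
  linear_combination (norm := abel) hxy - hx - hy

/-- Linearized right alternativity. -/
theorem IsHomAlternative.right_skew {mul : A →ₗ[K] A →ₗ[K] A} {α : A →ₗ[K] A}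
    (h : IsHomAlternative mul α) (x y z : A) :
    mul (mul x y) (α z) - mul (α x) (mul y z)
      + (mul (mul x z) (α y) - mul (α x) (mul z y)) = 0 := by
  have hyz := h.2.2 (y + z) x
  have hy := h.2.2 y x
  have hz := h.2.2 z x
  simp only [map_add, LinearMap.add_apply] at hyz
  linear_combination (norm := abel) hyz - hy - hz

/-- a Rota-Baxter operator of weight 0 on a Hom-alternative algebra induces
a Hom-pre-alternative algebra via `x≺y = x∗R(y)`, `x≻y = R(x)∗y`, and the Hom-pre-Malcev
product `x·y = [R(x),y]` satisfies `x·y = x≻y − y≺x`. -/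
theorem rotaBaxter_induces_homPreAlternative
    (mul : A →ₗ[K] A →ₗ[K] A) (α : A →ₗ[K] A) (h : IsHomAlternative mul α)
    (R : A →ₗ[K] A) (hRα : R ∘ₗ α = α ∘ₗ R)
    (hR : ∀ x y : A, mul (R x) (R y) = R (mul (R x) y + mul x (R y))) :
    IsHomPreAlternative (mul.compl₂ R) (mul ∘ₗ R) α ∧
      ∀ x y : A, mul (R x) y - mul y (R x) = (mul ∘ₗ R) x y - (mul.compl₂ R) y x := by
  have hc : ∀ x, R (α x) = α (R x) := fun x => LinearMap.congr_fun hRα x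
  have hR' : ∀ x y, R (mul x (R y)) + R (mul (R x) y) = mul (R x) (R y) := fun x y => by
    rw [hR, map_add, add_comm]
  refine ⟨⟨fun x y => ?_, fun x y => ?_, fun x y z => ?_, fun x y z => ?_, fun x y z => ?_,
    fun x y z => ?_⟩, fun x y => ?_⟩ <;>
    simp only [LinearMap.compl₂_apply, LinearMap.comp_apply, LinearMap.add_apply, map_add R, hc,
      hR', h.1]
  · linear_combination (norm := abel) h.left_skew (R x) y (R z)
  · linear_combination (norm := abel) h.right_skew (R x) y (R z)
  · linear_combination (norm := abel) h.left_skew (R x) (R y) z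
  · linear_combination (norm := abel) h.right_skew x (R y) (R z)
end

section
/- Let (A, ·, α) be a Hom-algebra (· bilinear, α linear) with α(x·y) = α(x)·α(y). Then (A, ·, α) is a Hom-pre-Malcev algebra if and only if (A, [-,-], α), with [x,y] = x·y − y·x, is a Hom-Malcev algebra and the left multiplication map L: A → End(A), L(x)(y) = x·y, is a representation of (A, [-,-], α) on A with respect to α. -/
/-!
Evaluated at a vector `t`, the representation identity for left multiplication is the
Hom-pre-Malcev identity up to rearrangement (using `[x,z] = -[z,x]` and multiplicativity of `α`).
So the content is that a Hom-pre-Malcev product has a Hom-Malcev commutator.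
Writing `P(x,y,z,t) = 0` for the Hom-pre-Malcev identity, the Hom-Malcev identity at `(x,y,z)` is
the integral combination

`P(x,x,y,z) - P(x,y,z,x) + P(x,z,x,y) - P(x,z,y,x) - P(y,z,x,x) - P(z,x,y,x)`,

as one sees by expanding all commutators (`homMalcev_identity_of_preMalcev`).
-/


open LinearMap

variable {K : Type*} [Field K] [CharZero K]
variable {A : Type*} [AddCommGroup A] [Module K A]
variable {V : Type*} [AddCommGroup V] [Module K V]

lemma commMul_apply' (mul : A →ₗ[K] A →ₗ[K] A) (x y : A) :
    commMul mul x y = mul x y - mul y x := by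
  simp [commMul]

/-- The Hom-pre-Malcev identity implies the Hom-Malcev identity for the commutator. -/
lemma homMalcev_identity_of_preMalcev (mul : A →ₗ[K] A →ₗ[K] A) (α : A →ₗ[K] A)
    (h : IsHomPreMalcev mul α) (x y z : A) :
    homJac (commMul mul) α (α x) (α y) (commMul mul x z) =
      commMul mul (homJac (commMul mul) α x y z) (α (α x)) := by
  obtain ⟨hm, hP⟩ := h
  have h1 := hP x x y z
  have h2 := hP x y z x
  have h3 := hP x z x y
  have h4 := hP x z y x
  have h5 := hP y z x x
  have h6 := hP z x y x
  simp only [homJac, commMul_apply', hm, map_sub, map_add, LinearMap.sub_apply,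
    LinearMap.add_apply] at h1 h2 h3 h4 h5 h6 ⊢
  linear_combination (norm := module) h1 - h2 + h3 - h4 - h5 - h6

/-- a multiplicative Hom-algebra is Hom-pre-Malcev iff its commutator is a
Hom-Malcev algebra and left multiplication is a representation of it. -/
theorem isHomPreMalcev_iff_commutator_and_leftMul_rep
    (mul : A →ₗ[K] A →ₗ[K] A) (α : A →ₗ[K] A)
    (hmult : ∀ x y : A, α (mul x y) = mul (α x) (α y)) :
    IsHomPreMalcev mul α ↔
      (IsHomMalcev (commMul mul) α ∧ IsHomMalcevRep (commMul mul) α mul α) := by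
  constructor
  · intro h
    refine ⟨⟨fun x y => ?_, fun x y => ?_, homMalcev_identity_of_preMalcev mul α h⟩,
      fun x => ?_, fun x y z => ?_⟩
    · simp only [commMul_apply', neg_sub]
    · simp only [commMul_apply', map_sub, hmult]
    · ext t
      simp only [LinearMap.comp_apply, hmult]
    · ext t
      have ht := h.2 x y z t
      simp only [commMul_apply', hmult, map_sub, LinearMap.sub_apply, LinearMap.add_apply,
        LinearMap.comp_apply] at ht ⊢
      rw [← sub_eq_zero, ← ht]
      abel
  · rintro ⟨-, -, hrep⟩
    refine ⟨hmult, fun x y z t => ?_⟩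
    have ht := LinearMap.congr_fun (hrep x y z) t
    simp only [commMul_apply', hmult, map_sub, LinearMap.sub_apply, LinearMap.add_apply,
      LinearMap.comp_apply] at ht ⊢
    rw [← sub_eq_zero] at ht
    rw [← ht]
    abel
end
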